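/- Let G_1 = (V_1, E_1) and G_2 = (V_2, E_2) be finite simple graphs, let H_1 be a path-intersecting subgraph of G_1 and H_2 a path-intersecting subgraph of G_2, and suppose φ : H_2 → H_1 is a graph isomorphism. Let G = G_1 ⊕_{H_1} G_2 be the subgraph sum: the simple graph obtained from the disjoint union of G_1 and G_2 by identifying each vertex w of H_2 with the vertex φ(w) of H_1. Then the chromatic polynomials satisfy χ(G,t)·χ(H_1,t) = χ(G_1,t)·χ(G_2,t). -/

import Mathlib

/-- A subgraph `H` of a simple graph `G` is *path-intersecting* if for every pair of
vertices `u v ∈ V_H` that are distinct and non-adjacent in `H`, there is no path `P`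
in `G` from `u` to `v` whose edge set is disjoint from the edge set of `H` and whose
vertex set meets the vertex set of `H` exactly in `{u, v}`. -/
def SimpleGraph.Subgraph.PathIntersecting {V : Type*} {G : SimpleGraph V}
    (H : G.Subgraph) : Prop :=
  ∀ ⦃u v : V⦄, u ∈ H.verts → v ∈ H.verts → u ≠ v → ¬ H.Adj u v →
    ∀ p : G.Walk u v, p.IsPath → (∀ e ∈ p.edges, e ∉ H.edgeSet) →
      ¬ (∀ w ∈ p.support, w ∈ H.verts → w = u ∨ w = v)

/-!
Fix a finite set of colours. If `D` is a connected component of `G - H`, then any two vertices of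
`H` with a neighbour in `D` are joined by a path through `D`, so they are adjacent in `H` when `H`
is path-intersecting: the vertices of `H` attached to `D` form a clique of `H`. Any two colourings
`c`, `c'` of `H` are injective on this clique, hence differ there by a permutation of the colours.
Applying that permutation on `D`, for each `D`, turns extensions of `c` to `G` into extensions of
`c'`, so the number of extensions does not depend on the colouring of `H`.

A colouring of the subgraph sum is a colouring of `G₁` together with a colouring of `G₂` that
agrees with it on `H₂`. Since all fibres of the restriction from `G₂` to `H₂` have the same size,
the numbers of colourings multiply as claimed, and polynomials that agree at all natural numbers
are equal.
-/

open SimpleGraph Function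

theorem polynomial_eq_of_eval_natCast_eq {R : Type*} [CommRing R] [IsDomain R] [CharZero R]
    {p q : Polynomial R} (h : ∀ n : ℕ, p.eval (n : R) = q.eval (n : R)) : p = q :=
  p.eq_of_infinite_eval_eq q <|
    (Set.infinite_range_of_injective (Nat.cast_injective (R := R))).mono <|
      Set.range_subset_iff.2 h

theorem nonempty_pullback_prod_equiv {A B C : Type*} (r : A → C) (s : B → C)
    (hs : ∀ c c' : C, Nonempty ({b // s b = c} ≃ {b // s b = c'})) :
    Nonempty (r.Pullback s × C ≃ A × B) := by
  let fiberEquiv (c c' : C) := (hs c c').some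
  exact ⟨calc
    r.Pullback s × C
      ≃ (Σ a, {b // r a = s b}) × C :=
        (Equiv.subtypeProdEquivSigmaSubtype fun a b ↦ r a = s b).prodCongr (.refl C)
    _ ≃ (Σ a, {b // s b = r a} × C) :=
        (Equiv.sigmaProdDistrib _ C).trans <| .sigmaCongrRight fun _ ↦
          (Equiv.subtypeEquivRight fun _ ↦ eq_comm).prodCongr (.refl C)
    _ ≃ (Σ _ : A, Σ c, {b // s b = c}) :=
        .sigmaCongrRight fun a ↦ (Equiv.prodComm _ C).trans <|
          (Equiv.sigmaEquivProd C _).symm.trans <| .sigmaCongrRight (fiberEquiv (r a))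
    _ ≃ (Σ _ : A, B) := .sigmaCongrRight fun _ ↦ .sigmaFiberEquiv s
    _ ≃ A × B := .sigmaEquivProd A B⟩

section PathIntersecting

variable {V α : Type*} {G : SimpleGraph V} {H : G.Subgraph}

theorem adj_of_walk_of_pathIntersecting (hH : H.PathIntersecting) {a b : V} (ha : a ∈ H.verts)
    (hb : b ∈ H.verts) (hab : a ≠ b) (p : G.Walk a b)
    (hp : ∀ w ∈ p.support, w ∈ H.verts → w = a ∨ w = b) : H.Adj a b := by
  classical
  by_contra hadj
  have hbypass : ∀ w ∈ p.bypass.support, w ∈ H.verts → w = a ∨ w = b := fun w hw ↦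
    hp w (p.support_bypass_subset_support hw)
  refine hH ha hb hab hadj p.bypass p.bypass_isPath ?_ hbypass
  rintro ⟨x, y⟩ he (hxy : H.Adj x y)
  have hx := hbypass x (p.bypass.fst_mem_support_of_mem_edges he) hxy.fst_mem
  have hy := hbypass y (p.bypass.snd_mem_support_of_mem_edges he) hxy.snd_mem
  rcases hx with rfl | rfl <;> rcases hy with rfl | rfl
  · exact hxy.ne rfl
  · exact hadj hxy
  · exact hadj hxy.symm
  · exact hxy.ne rfl

theorem isInduced_of_pathIntersecting (hH : H.PathIntersecting) : H.IsInduced :=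
  fun _ ha _ hb hab ↦ adj_of_walk_of_pathIntersecting hH ha hb hab.ne hab.toWalk (by simp)

/-- The set of attachments of a connected component `D` of `G - H`: the vertices of `H` that have a
neighbour in `D`. -/
def attachments (H : G.Subgraph) (D : G.ComponentCompl H.verts) : Set H.verts :=
  {a | ∃ w ∈ D, G.Adj a w}

theorem isClique_attachments (hH : H.PathIntersecting)
    (D : G.ComponentCompl H.verts) : H.coe.IsClique (attachments H D) := by
  rintro a ⟨w, ⟨hw, rfl⟩, haw⟩ b ⟨w', ⟨hw', hD⟩, hbw'⟩ hab
  obtain ⟨q⟩ : (G.induce H.vertsᶜ).Reachable ⟨w, hw⟩ ⟨w', hw'⟩ := ConnectedComponent.exact hD.symm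
  let q' : G.Walk w w' := q.map (Embedding.induce H.vertsᶜ).toHom
  have hq' : ∀ x ∈ q'.support, x ∉ H.verts := by
    intro x hx
    obtain ⟨y, -, rfl⟩ := List.mem_map.1 (q.support_map _ ▸ hx)
    exact y.2
  refine adj_of_walk_of_pathIntersecting hH a.2 b.2 (Subtype.coe_ne_coe.2 hab)
    (.cons haw (q'.concat hbw'.symm)) fun x hx hxH ↦ ?_
  have hx' : x = a ∨ x ∈ q'.support ∨ x = b := by
    simpa [Walk.support_concat] using hx
  exact hx'.imp_right (Or.resolve_left · fun hxq ↦ hq' x hxq hxH)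

theorem exists_perm_forall_attachments [Finite α] (hH : H.PathIntersecting)
    (c c' : H.coe.Coloring α) (D : G.ComponentCompl H.verts) :
    ∃ σ : Equiv.Perm α, ∀ a ∈ attachments H D, σ (c a) = c' a := by
  have hclique : Pairwise fun a b : attachments H D ↦ H.coe.Adj a b := fun a b hab ↦
    isClique_attachments hH D a.2 b.2 (Subtype.coe_ne_coe.2 hab)
  have hc := c.injective_comp_of_pairwise_adj _ hclique
  have hc' := c'.injective_comp_of_pairwise_adj _ hclique
  have : Finite (attachments H D) := .of_injective _ hc
  obtain ⟨σ, hσ⟩ := Equiv.Perm.exists_extending_pair _ _ hc hc'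
  exact ⟨σ, fun a ha ↦ hσ ⟨a, ha⟩⟩

/-- The extensions to `G` of a colouring `c` of the subgraph `H`, as the fibre over `c` of the
restriction of colourings from `G` to `H`. -/
abbrev ColoringExtension (H : G.Subgraph) (c : H.coe.Coloring α) : Type _ :=
  {f : G.Coloring α // f.comap H.hom = c}

theorem exists_recoloring_perms [Finite α] (hH : H.PathIntersecting)
    (c c' : H.coe.Coloring α) :
    ∃ σ : V → Equiv.Perm α, (∀ a : H.verts, σ a (c a) = c' a) ∧
      ∀ (f : ColoringExtension H c) ⦃u v⦄, G.Adj u v → v ∉ H.verts →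
        σ u (f.1 u) = σ v (f.1 u) := by
  choose τ hτ using exists_perm_forall_attachments hH c c'
  classical
  -- On `H` only the value of `σ a` at `c a` matters, so a transposition will do.
  let σ : V → Equiv.Perm α := fun v ↦
    if h : v ∈ H.verts then Equiv.swap (c ⟨v, h⟩) (c' ⟨v, h⟩)
    else τ (G.componentComplMk h)
  have hσ (a : H.verts) : σ a (c a) = c' a := by simp [σ]
  refine ⟨σ, hσ, fun ⟨f, hf⟩ u v huv hv ↦ ?_⟩
  by_cases hu : u ∈ H.verts
  · have hfu : f u = c ⟨u, hu⟩ := DFunLike.congr_fun hf ⟨u, hu⟩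
    have hτv := hτ (G.componentComplMk hv) ⟨u, hu⟩
      ⟨v, G.componentComplMk_mem hv, huv⟩
    simpa [σ, hv, hfu, hτv] using hσ ⟨u, hu⟩
  · simp only [σ, hu, hv, dite_false, G.componentComplMk_eq_of_adj hu hv huv]

theorem nonempty_coloringExtension_embedding [Finite α] (hH : H.PathIntersecting)
    (c c' : H.coe.Coloring α) : Nonempty (ColoringExtension H c ↪ ColoringExtension H c') := by
  obtain ⟨σ, hσH, hσ⟩ := exists_recoloring_perms hH c c'
  have hrestrict (f : ColoringExtension H c) (a : H.verts) : σ a (f.1 a) = c' a :=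
    (congrArg (σ a) (DFunLike.congr_fun f.2 a)).trans (hσH a)
  have hproper (f : ColoringExtension H c) {u v : V} (huv : G.Adj u v) :
      σ u (f.1 u) ≠ σ v (f.1 v) := by
    by_cases hv : v ∈ H.verts
    · by_cases hu : u ∈ H.verts
      · have huvH : H.coe.Adj ⟨u, hu⟩ ⟨v, hv⟩ := isInduced_of_pathIntersecting hH hu hv huv
        exact hrestrict f ⟨u, hu⟩ ▸ hrestrict f ⟨v, hv⟩ ▸ c'.valid huvH
      · rw [hσ f huv.symm hu]
        exact (σ u).injective.ne (f.1.valid huv)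
    · rw [hσ f huv hv]
      exact (σ v).injective.ne (f.1.valid huv)
  refine ⟨⟨fun f ↦ ⟨.mk (fun v ↦ σ v (f.1 v)) (hproper f), RelHom.ext (hrestrict f)⟩,
    fun f g hfg ↦ Subtype.ext <| RelHom.ext fun v ↦ (σ v).injective ?_⟩⟩
  exact DFunLike.congr_fun (Subtype.ext_iff.1 hfg) v

theorem nonempty_coloringExtension_equiv [Finite α] (hH : H.PathIntersecting)
    (c c' : H.coe.Coloring α) : Nonempty (ColoringExtension H c ≃ ColoringExtension H c') :=
  Embedding.antisymm (nonempty_coloringExtension_embedding hH c c').some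
    (nonempty_coloringExtension_embedding hH c' c).some

end PathIntersecting

section SubgraphSum

variable {V₁ V₂ α : Type*} {G₁ : SimpleGraph V₁} {G₂ : SimpleGraph V₂}
  {H₁ : G₁.Subgraph} {H₂ : G₂.Subgraph} (φ : H₂.coe ≃g H₁.coe)

open scoped Classical in
/-- The map from the vertices of `G₂` to those of the subgraph sum, which identifies each vertex `w`
of `H₂` with `φ w`. The vertices of the sum are encoded as those of `G₁` together with those of `G₂`
outside `H₂`. -/
noncomputable def gluingMap (v : V₂) : V₁ ⊕ {v : V₂ // v ∉ H₂.verts} :=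
  if h : v ∈ H₂.verts then .inl (φ ⟨v, h⟩) else .inr ⟨v, h⟩

variable {φ} in
theorem gluingMap_of_mem {v : V₂} (h : v ∈ H₂.verts) : gluingMap φ v = .inl ↑(φ ⟨v, h⟩) :=
  dif_pos h

variable {φ} in
theorem gluingMap_of_notMem {v : V₂} (h : v ∉ H₂.verts) : gluingMap φ v = .inr ⟨v, h⟩ :=
  dif_neg h

theorem gluingMap_injective : Injective (gluingMap φ) := by
  intro u v huv
  by_cases hu : u ∈ H₂.verts <;> by_cases hv : v ∈ H₂.verts <;>
    simp_all [gluingMap, Subtype.coe_inj]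

/-- The subgraph sum `G₁ ⊕_{H₁} G₂` along the isomorphism `φ : H₂ ≃g H₁`: the union of `G₁` and of
the image of `G₂` under `gluingMap φ`. -/
noncomputable def subgraphSum : SimpleGraph (V₁ ⊕ {v : V₂ // v ∉ H₂.verts}) :=
  G₁.map Sum.inl ⊔ G₂.map (gluingMap φ)

variable {φ} in
theorem eq_subgraphSum_of_adj_iff {ρ : V₂ → V₁ ⊕ {v : V₂ // v ∉ H₂.verts}}
    (hρ₁ : ∀ (v : V₂) (h : v ∈ H₂.verts), ρ v = .inl ↑(φ ⟨v, h⟩))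
    (hρ₂ : ∀ (v : V₂) (h : v ∉ H₂.verts), ρ v = .inr ⟨v, h⟩)
    {G : SimpleGraph (V₁ ⊕ {v : V₂ // v ∉ H₂.verts})}
    (hG : ∀ a b, G.Adj a b ↔
      (∃ x y : V₁, G₁.Adj x y ∧ a = .inl x ∧ b = .inl y) ∨
      (∃ x y : V₂, G₂.Adj x y ∧ a = ρ x ∧ b = ρ y)) :
    G = subgraphSum φ := by
  obtain rfl : ρ = gluingMap φ := by
    funext v
    by_cases h : v ∈ H₂.verts
    · rw [hρ₁ v h, gluingMap_of_mem h]
    · rw [hρ₂ v h, gluingMap_of_notMem h]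
  ext a b
  rw [← and_iff_right_of_imp (G.ne_of_adj (a := a) (b := b)), hG, subgraphSum, sup_adj, map_adj',
    map_adj', ← and_or_left]
  simp only [eq_comm]

/-- The inclusion of `G₁` into the subgraph sum. -/
noncomputable def subgraphSumInl : G₁ →g subgraphSum φ :=
  (Hom.ofLE le_sup_left).comp (Embedding.map .inl G₁).toHom

/-- The inclusion of `G₂` into the subgraph sum. -/
noncomputable def subgraphSumInr : G₂ →g subgraphSum φ :=
  (Hom.ofLE le_sup_right).comp (Embedding.map ⟨gluingMap φ, gluingMap_injective φ⟩ G₂).toHom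

/-- The restriction to `H₂` of a colouring of `G₁`, transported along `φ`. -/
def restrictAlong (f : G₁.Coloring α) : H₂.coe.Coloring α :=
  (f.comap H₁.hom).comap φ.toHom

variable {φ} in
theorem sumElim_gluingMap {f : G₁.Coloring α} {g : G₂.Coloring α}
    (hfg : restrictAlong φ f = g.comap H₂.hom) (v : V₂) :
    Sum.elim f (fun w ↦ g w.1) (gluingMap φ v) = g v := by
  by_cases hv : v ∈ H₂.verts
  · rw [gluingMap_of_mem hv]
    exact DFunLike.congr_fun hfg ⟨v, hv⟩
  · rw [gluingMap_of_notMem hv, Sum.elim_inr]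

/-- Colourings of the subgraph sum are the pairs of colourings of `G₁` and `G₂` that agree on the
identified vertices. -/
noncomputable def subgraphSumColoringEquiv :
    (subgraphSum φ).Coloring α ≃
      (restrictAlong (α := α) φ).Pullback (Coloring.comap · H₂.hom) where
  toFun f := ⟨(f.comap (subgraphSumInl φ), f.comap (subgraphSumInr φ)),
    RelHom.ext fun v ↦ congrArg f (gluingMap_of_mem v.2).symm⟩
  invFun p := .mk (Sum.elim p.1.1 fun w ↦ p.1.2 w.1) <| by
    rintro _ _ (⟨-, u, v, huv, rfl, rfl⟩ | ⟨-, u, v, huv, rfl, rfl⟩)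
    · exact p.1.1.valid huv
    · simpa only [sumElim_gluingMap p.2] using p.1.2.valid huv
  left_inv f := by
    ext (v | ⟨v, hv⟩)
    · rfl
    · exact congrArg f (gluingMap_of_notMem hv)
  right_inv p := Subtype.ext <| Prod.ext rfl <| RelHom.ext (sumElim_gluingMap p.2)

theorem nonempty_coloring_subgraphSum_prod_equiv [Finite α] (h₂ : H₂.PathIntersecting) :
    Nonempty ((subgraphSum φ).Coloring α × H₁.coe.Coloring α ≃
      G₁.Coloring α × G₂.Coloring α) :=
  (nonempty_pullback_prod_equiv (restrictAlong φ) (Coloring.comap · H₂.hom)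
    (nonempty_coloringExtension_equiv h₂)).map
      ((subgraphSumColoringEquiv φ).prodCongr (coloringCongr φ.symm (.refl α))).trans

theorem subgraph_sum_chromatic_polynomial_general [Finite V₁] [Finite V₂]
    (h₂ : H₂.PathIntersecting) {R : Type*} [CommRing R] [IsDomain R] [CharZero R]
    {P PH P₁ P₂ : Polynomial R}
    (hP : ∀ k : ℕ, P.eval (k : R) = Nat.card ((subgraphSum φ).Coloring (Fin k)))
    (hPH : ∀ k : ℕ, PH.eval (k : R) = Nat.card (H₁.coe.Coloring (Fin k)))
    (hP₁ : ∀ k : ℕ, P₁.eval (k : R) = Nat.card (G₁.Coloring (Fin k)))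
    (hP₂ : ∀ k : ℕ, P₂.eval (k : R) = Nat.card (G₂.Coloring (Fin k))) :
    P * PH = P₁ * P₂ := by
  refine polynomial_eq_of_eval_natCast_eq fun k ↦ ?_
  obtain ⟨e⟩ := nonempty_coloring_subgraphSum_prod_equiv (α := Fin k) φ h₂
  have hcard := Nat.card_congr e
  rw [Nat.card_prod, Nat.card_prod] at hcard
  rw [Polynomial.eval_mul, Polynomial.eval_mul, hP, hPH, hP₁, hP₂]
  exact_mod_cast hcard

end SubgraphSum

/-- **Chromatic polynomial of a subgraph sum.**
Let `G₁`, `G₂` be finite simple graphs, `H₁` a path-intersecting subgraph of `G₁`,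
`H₂` a path-intersecting subgraph of `G₂`, and `φ : H₂ ≃g H₁` a graph isomorphism.
Let `G = G₁ ⊕_{H₁} G₂` be the subgraph sum, obtained from the disjoint union of `G₁`
and `G₂` by identifying each vertex `w` of `H₂` with the vertex `φ(w)` of `H₁`
(its vertex type is `V₁ ⊕ {v : V₂ // v ∉ H₂.verts}`, and `ρ : V₂ → V₁ ⊕ _` is the
resulting identification map on the vertices of `G₂`).  Then
`χ(G,t)·χ(H₁,t) = χ(G₁,t)·χ(G₂,t)`. -/
theorem subgraph_sum_chromatic_polynomial {V₁ V₂ : Type*} [Fintype V₁] [Fintype V₂]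
    (G₁ : SimpleGraph V₁) (G₂ : SimpleGraph V₂)
    (H₁ : G₁.Subgraph) (H₂ : G₂.Subgraph)
    (h₁ : H₁.PathIntersecting) (h₂ : H₂.PathIntersecting)
    (φ : H₂.coe ≃g H₁.coe)
    (ρ : V₂ → V₁ ⊕ {v : V₂ // v ∉ H₂.verts})
    (hρ₁ : ∀ (v : V₂) (h : v ∈ H₂.verts), ρ v = Sum.inl ((φ ⟨v, h⟩ : H₁.verts) : V₁))
    (hρ₂ : ∀ (v : V₂) (h : v ∉ H₂.verts), ρ v = Sum.inr ⟨v, h⟩)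
    (G : SimpleGraph (V₁ ⊕ {v : V₂ // v ∉ H₂.verts}))
    (hG : ∀ a b, G.Adj a b ↔
      (∃ x y : V₁, G₁.Adj x y ∧ a = Sum.inl x ∧ b = Sum.inl y) ∨
      (∃ x y : V₂, G₂.Adj x y ∧ a = ρ x ∧ b = ρ y))
    (P PH P₁ P₂ : Polynomial ℚ)
    (hP : ∀ k : ℕ, P.eval (k : ℚ) = Nat.card (G.Coloring (Fin k)))
    (hPH : ∀ k : ℕ, PH.eval (k : ℚ) = Nat.card (H₁.coe.Coloring (Fin k)))
    (hP₁ : ∀ k : ℕ, P₁.eval (k : ℚ) = Nat.card (G₁.Coloring (Fin k)))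
    (hP₂ : ∀ k : ℕ, P₂.eval (k : ℚ) = Nat.card (G₂.Coloring (Fin k))) :
    P * PH = P₁ * P₂ := by
  obtain rfl := eq_subgraphSum_of_adj_iff hρ₁ hρ₂ hG
  exact subgraph_sum_chromatic_polynomial_general φ h₂ hP hPH hP₁ hP₂
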